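/- (Energy bound under displacement.) For $m,n\in\mathbb N$ and $z,w\in\mathbb C$ let $$L_{m,n}(z,w)=\sum_{j=0}^{\min(m,n)}\frac{(-1)^j\,m!\,n!}{j!\,(m-j)!\,(n-j)!}\,z^{m-j}w^{n-j}$$ be the two-dimensional Laguerre polynomial. Let $s>1$, $\alpha\in\mathbb C$, and let $(\psi_n)_{n\in\mathbb N}$ be a sequence of complex numbers with $\sum_{n\ge0}s^n|\psi_n|^2<\infty$. Define the displacement matrix elements $$D_{mn}=\frac{(-1)^n e^{-|\alpha|^2/2}}{\sqrt{m!\,n!}}\,L_{m,n}(\alpha,\overline{\alpha}),\qquad m,n\in\mathbb N.$$ Then for every $m\in\mathbb N$ the series $\varphi_m:=\sum_{n\ge0}D_{mn}\psi_n$ converges absolutely, and for every real $t$ with $0\le t<s$ one has $$\sum_{m\ge0}t^m|\varphi_m|^2\;\le\;\frac{s}{s-t}\,\exp\!\left(-(s-1)|\alpha|^2\left(\frac1s-\frac{t(s-1)}{s(s-t)}\right)\right)\sum_{n\ge0}s^n|\psi_n|^2\;<\;\infty .$$ -/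

import Mathlib

/-- The two-dimensional Laguerre polynomial
`L_{m,n}(z,w) = Σ_{j=0}^{min(m,n)} (-1)^j m! n!/(j! (m-j)! (n-j)!) z^(m-j) w^(n-j)`. -/
noncomputable def laguerre2D (m n : ℕ) (z w : ℂ) : ℂ :=
  ∑ j ∈ Finset.range (min m n + 1),
    (-1 : ℂ) ^ j * (m.factorial : ℂ) * (n.factorial : ℂ) /
        ((j.factorial : ℂ) * ((m - j).factorial : ℂ) * ((n - j).factorial : ℂ)) *
      z ^ (m - j) * w ^ (n - j)

/-- The Fock matrix elements of the displacement operator `D̂(α)`: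
`⟨m|D̂(α)|n⟩ = (-1)^n e^(-|α|²/2) L_{m,n}(α, conj α)/√(m! n!)`. -/
noncomputable def dispElem (α : ℂ) (m n : ℕ) : ℂ :=
  (-1 : ℂ) ^ n * ((Real.exp (-‖α‖ ^ 2 / 2) : ℝ) : ℂ) *
      laguerre2D m n α (starRingEnd ℂ α) /
    ((Real.sqrt ((m.factorial : ℝ) * (n.factorial : ℝ)) : ℝ) : ℂ)

/-- The Fock amplitudes `φ_m = Σ_n ⟨m|D̂(α)|n⟩ ψ_n` of the displaced state `D̂(α)|ψ⟩`. -/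
noncomputable def dispAmplitude (α : ℂ) (ψ : ℕ → ℂ) (m : ℕ) : ℂ :=
  ∑' n : ℕ, dispElem α m n * ψ n

/-- The coefficient `n! k! [x^n y^k] exp (a x + b y + c x y)`: the two-variable Hermite
polynomial with coupling `c`. -/
noncomputable def hermite2D (c : ℂ) (n k : ℕ) (a b : ℂ) : ℂ :=
  ∑ j ∈ Finset.range (min n k + 1),
    (n.choose j : ℂ) * (k.choose j : ℂ) * (j.factorial : ℂ) * c ^ j * a ^ (n - j) * b ^ (k - j)

theorem hermite2D_comm (c : ℂ) (n k : ℕ) (a b : ℂ) :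
    hermite2D c n k a b = hermite2D c k n b a := by
  unfold hermite2D
  rw [min_comm]
  exact Finset.sum_congr rfl fun j _ => by ring

theorem hermite2D_eq_sum_range (c : ℂ) (n k : ℕ) (a b : ℂ) :
    hermite2D c n k a b = ∑ j ∈ Finset.range (n + 1),
      (n.choose j : ℂ) * (k.descFactorial j : ℂ) * c ^ j * a ^ (n - j) * b ^ (k - j) := by
  unfold hermite2D
  trans ∑ j ∈ Finset.range (min n k + 1),
      (n.choose j : ℂ) * (k.descFactorial j : ℂ) * c ^ j * a ^ (n - j) * b ^ (k - j)
  · refine Finset.sum_congr rfl fun j _ => ?_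
    rw [Nat.descFactorial_eq_factorial_mul_choose]
    push_cast
    ring
  refine Finset.sum_subset ?_ ?_
  · intro j hj
    simp only [Finset.mem_range] at hj ⊢
    omega
  · intro j hj hj'
    simp only [Finset.mem_range] at hj hj'
    rw [Nat.descFactorial_of_lt (by omega : k < j)]
    simp

theorem hermite2D_zero_left (c : ℂ) (k : ℕ) (a b : ℂ) : hermite2D c 0 k a b = b ^ k := by
  simp [hermite2D]

theorem hermite2D_zero_right (c : ℂ) (n : ℕ) (a b : ℂ) : hermite2D c n 0 a b = a ^ n := by
  simp [hermite2D]

theorem hermite2D_succ_left (c : ℂ) (n k : ℕ) (a b : ℂ) :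
    hermite2D c (n + 1) k a b =
      a * hermite2D c n k a b + c * k * hermite2D c n (k - 1) a b := by
  simp only [hermite2D_eq_sum_range]
  rw [Finset.sum_range_succ', Finset.mul_sum, Finset.mul_sum]
  have hsplit : ∀ j ∈ Finset.range (n + 1),
      ((n + 1).choose (j + 1) : ℂ) * (k.descFactorial (j + 1) : ℂ) * c ^ (j + 1) *
          a ^ (n + 1 - (j + 1)) * b ^ (k - (j + 1)) =
        (n.choose (j + 1) : ℂ) * (k.descFactorial (j + 1) : ℂ) * c ^ (j + 1) *
            a ^ (n - j) * b ^ (k - (j + 1)) +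
          c * k * ((n.choose j : ℂ) * ((k - 1).descFactorial j : ℂ) * c ^ j * a ^ (n - j) *
            b ^ (k - 1 - j)) := by
    intro j _
    have hd : (k.descFactorial (j + 1) : ℂ) = k * ((k - 1).descFactorial j : ℂ) := by
      cases k with
      | zero => simp
      | succ k => rw [Nat.succ_descFactorial_succ]; push_cast; simp
    rw [Nat.choose_succ_succ, hd, Nat.add_sub_add_right,
      show k - (j + 1) = k - 1 - j by omega]
    push_cast
    ring
  rw [Finset.sum_congr rfl hsplit, Finset.sum_add_distrib, add_right_comm]
  congr 1
  rw [Finset.sum_range_succ, Finset.sum_range_succ' _ n]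
  simp only [Nat.choose_succ_self, Nat.cast_zero, zero_mul, add_zero]
  congr 1
  · refine Finset.sum_congr rfl fun j hj => ?_
    rw [show n - j = n - (j + 1) + 1 by have := Finset.mem_range.1 hj; omega]
    ring
  · simp
    ring

theorem hermite2D_succ_right (c : ℂ) (n k : ℕ) (a b : ℂ) :
    hermite2D c n (k + 1) a b =
      b * hermite2D c n k a b + c * n * hermite2D c (n - 1) k a b := by
  rw [hermite2D_comm, hermite2D_succ_left, hermite2D_comm c k n, hermite2D_comm c k (n - 1)]

theorem laguerre2D_eq_hermite2D (m n : ℕ) (z w : ℂ) :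
    laguerre2D m n z w = hermite2D (-1) m n z w := by
  unfold laguerre2D hermite2D
  refine Finset.sum_congr rfl fun j hj => ?_
  have hj' := Finset.mem_range.1 hj
  rw [Nat.cast_choose ℂ (by omega : j ≤ m), Nat.cast_choose ℂ (by omega : j ≤ n)]
  have h1 : (j.factorial : ℂ) ≠ 0 := by exact_mod_cast j.factorial_ne_zero
  have h2 : ((m - j).factorial : ℂ) ≠ 0 := by exact_mod_cast (m - j).factorial_ne_zero
  have h3 : ((n - j).factorial : ℂ) ≠ 0 := by exact_mod_cast (n - j).factorial_ne_zero
  field_simp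

theorem laguerre2D_succ_left (m n : ℕ) (z w : ℂ) :
    laguerre2D (m + 1) n z w = z * laguerre2D m n z w - n * laguerre2D m (n - 1) z w := by
  simp only [laguerre2D_eq_hermite2D, hermite2D_succ_left]
  ring

theorem laguerre2D_succ_right (m n : ℕ) (z w : ℂ) :
    laguerre2D m (n + 1) z w = w * laguerre2D m n z w - m * laguerre2D (m - 1) n z w := by
  simp only [laguerre2D_eq_hermite2D, hermite2D_succ_right]
  ring

theorem laguerre2D_zero_right (m : ℕ) (z w : ℂ) : laguerre2D m 0 z w = z ^ m := by
  rw [laguerre2D_eq_hermite2D, hermite2D_zero_right]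

theorem conj_laguerre2D (m n : ℕ) (z w : ℂ) :
    starRingEnd ℂ (laguerre2D m n z w) =
      laguerre2D m n (starRingEnd ℂ z) (starRingEnd ℂ w) := by
  simp [laguerre2D, map_sum]

/-- A weighted sum carrying a factor `m` in front of `g (m - 1)` shifts its index. -/
theorem HasSum.pow_div_factorial_mul_nat {t S : ℂ} {g h : ℕ → ℂ}
    (H : HasSum (fun m : ℕ => t ^ m / m.factorial * (g m * h (m + 1))) S) :
    HasSum (fun m : ℕ => t ^ m / m.factorial * (m * g (m - 1) * h m)) (t * S) := by
  refine (hasSum_nat_add_iff' 1).1 ?_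
  simp only [Finset.range_one, Finset.sum_singleton, Nat.cast_zero, zero_mul, mul_zero, sub_zero]
  refine (H.mul_left t).congr_fun ?_
  intro m
  have h1 : (m.factorial : ℂ) ≠ 0 := by exact_mod_cast m.factorial_ne_zero
  have h2 : (m : ℂ) + 1 ≠ 0 := by exact_mod_cast m.succ_ne_zero
  simp only [Nat.add_sub_cancel, Nat.factorial_succ]
  push_cast
  field_simp
  ring

/-- Bilinear generating function of the two-dimensional Laguerre polynomials in the first
index. -/
theorem hasSum_laguerre2D_mul_laguerre2D (t z w z' w' : ℂ) (n k : ℕ) :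
    HasSum (fun m : ℕ => t ^ m / m.factorial * (laguerre2D m n z w * laguerre2D m k z' w'))
      (Complex.exp (t * z * z') * hermite2D t n k (w - t * z') (w' - t * z)) := by
  induction n generalizing k with
  | zero =>
    simp only [hermite2D_zero_left, laguerre2D_zero_right]
    induction k with
    | zero =>
      simp only [laguerre2D_zero_right, pow_zero, mul_one]
      have := NormedSpace.expSeries_div_hasSum_exp (𝔸 := ℂ) (t * z * z')
      rw [← Complex.exp_eq_exp_ℂ] at this
      refine this.congr_fun fun m => ?_
      rw [mul_pow, mul_pow]
      ring
    | succ k ih =>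
      have hshift : HasSum (fun m : ℕ => t ^ m / m.factorial *
          (laguerre2D m k z' w' * z ^ (m + 1)))
          (z * (Complex.exp (t * z * z') * (w' - t * z) ^ k)) :=
        (ih.mul_left z).congr_fun fun m => by ring
      rw [show Complex.exp (t * z * z') * (w' - t * z) ^ (k + 1) =
        w' * (Complex.exp (t * z * z') * (w' - t * z) ^ k) -
          t * (z * (Complex.exp (t * z * z') * (w' - t * z) ^ k)) by ring]
      refine ((ih.mul_left w').sub
        (HasSum.pow_div_factorial_mul_nat (h := fun m => z ^ m) hshift)).congr_fun fun m => ?_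
      rw [laguerre2D_succ_right]
      ring
  | succ n ih =>
    have hshift : HasSum (fun m : ℕ => t ^ m / m.factorial *
        (laguerre2D m n z w * laguerre2D (m + 1) k z' w')) _ :=
      (((ih k).mul_left z').sub ((ih (k - 1)).mul_left (k : ℂ))).congr_fun fun m => by
        rw [laguerre2D_succ_left]
        ring
    have hsum := ((ih k).mul_left w).sub (HasSum.pow_div_factorial_mul_nat
      (g := fun m => laguerre2D m n z w) (h := fun m => laguerre2D m k z' w') hshift)
    rw [show w * (Complex.exp (t * z * z') * hermite2D t n k (w - t * z') (w' - t * z)) -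
          t * (z' * (Complex.exp (t * z * z') * hermite2D t n k (w - t * z') (w' - t * z)) -
            k * (Complex.exp (t * z * z') *
              hermite2D t n (k - 1) (w - t * z') (w' - t * z))) =
        Complex.exp (t * z * z') * hermite2D t (n + 1) k (w - t * z') (w' - t * z) by
      rw [hermite2D_succ_left]; ring] at hsum
    refine hsum.congr_fun fun m => ?_
    rw [laguerre2D_succ_right]
    ring

theorem hasSum_prod_of_nonneg {ι κ : Type*} {f : ι × κ → ℝ} {g : ι → ℝ} {S : ℝ} (hf : 0 ≤ f)
    (hfg : ∀ i, HasSum (fun k => f (i, k)) (g i)) (hg : HasSum g S) : HasSum f S := by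
  have hs : Summable f := (summable_prod_of_nonneg hf).2
    ⟨fun i => (hfg i).summable, by simpa only [(hfg _).tsum_eq] using hg.summable⟩
  have := hs.hasSum.prod_fiberwise hfg
  rw [hg.unique this]
  exact hs.hasSum

theorem HasSum.sum_antidiagonal {f : ℕ × ℕ → ℝ} {S : ℝ} (hf : HasSum f S) :
    HasSum (fun n => ∑ p ∈ Finset.HasAntidiagonal.antidiagonal n, f p) S := by
  refine HasSum.sigma
    (Finset.HasAntidiagonal.sigmaAntidiagonalEquivProd.hasSum_iff.2 hf) fun n => ?_
  exact Finset.hasSum (Finset.HasAntidiagonal.antidiagonal n) f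

/-- Squared form of the Cauchy-Schwarz inequality for series of nonnegative terms. -/
theorem summable_mul_and_sq_tsum_mul_le {ι : Type*} {f g : ι → ℝ} (hf : ∀ i, 0 ≤ f i)
    (hg : ∀ i, 0 ≤ g i) (hf2 : Summable fun i => f i ^ 2) (hg2 : Summable fun i => g i ^ 2) :
    (Summable fun i => f i * g i) ∧
      (∑' i, f i * g i) ^ 2 ≤ (∑' i, f i ^ 2) * ∑' i, g i ^ 2 := by
  have h := Real.summable_and_inner_le_Lp_mul_Lq_tsum_of_nonneg Real.HolderConjugate.two_two
    hf hg (by simpa using hf2) (by simpa using hg2)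
  refine ⟨h.1, ?_⟩
  have h2 := h.2
  simp only [Real.rpow_two, ← Real.sqrt_eq_rpow] at h2
  have h0 : 0 ≤ ∑' i, f i * g i := tsum_nonneg fun i => mul_nonneg (hf i) (hg i)
  calc _ ≤ (√(∑' i, f i ^ 2) * √(∑' i, g i ^ 2)) ^ 2 := pow_le_pow_left₀ h0 h2 2
    _ = _ := by
      rw [mul_pow, Real.sq_sqrt (tsum_nonneg fun i => sq_nonneg _),
        Real.sq_sqrt (tsum_nonneg fun i => sq_nonneg _)]

theorem hasSum_pow_div_factorial_mul_sum_choose {t u q : ℝ} (ht : 0 ≤ t) (hu : 0 ≤ u)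
    (hq : 0 ≤ q) (htu : u * t < 1) :
    HasSum (fun n : ℕ => u ^ n / n.factorial * ∑ j ∈ Finset.range (n + 1),
        (n.choose j : ℝ) * n.choose j * j.factorial * t ^ j * q ^ (n - j))
      (1 / (1 - u * t) * Real.exp (u * q / (1 - u * t))) := by
  have hne : 1 - u * t ≠ 0 := by linarith
  let f : ℕ × ℕ → ℝ := fun p =>
    (u * q) ^ p.1 / p.1.factorial * ((p.2 + p.1).choose p.1 * (u * t) ^ p.2)
  have hf : 0 ≤ f := fun p => by positivity
  have hrow : ∀ k, HasSum (fun j => f (k, j))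
      (1 / (1 - u * t) * ((u * q / (1 - u * t)) ^ k / k.factorial)) := by
    intro k
    have h := (hasSum_choose_mul_geometric_of_norm_lt_one k
      (by rwa [Real.norm_of_nonneg (by positivity)] : ‖u * t‖ < 1)).mul_left
        ((u * q) ^ k / k.factorial)
    rw [show 1 / (1 - u * t) * ((u * q / (1 - u * t)) ^ k / k.factorial) =
      (u * q) ^ k / k.factorial * (1 / (1 - u * t) ^ (k + 1)) by
        rw [div_pow]; field_simp; ring]
    exact h
  have hexp := (NormedSpace.expSeries_div_hasSum_exp (u * q / (1 - u * t))).mul_left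
    (1 / (1 - u * t))
  rw [← Real.exp_eq_exp_ℝ] at hexp
  refine (hasSum_prod_of_nonneg hf hrow hexp).sum_antidiagonal.congr_fun fun n => ?_
  rw [← Finset.Nat.sum_antidiagonal_eq_sum_range_succ
    (fun j k => (n.choose j : ℝ) * n.choose j * j.factorial * t ^ j * q ^ k) n,
    ← Finset.Nat.sum_antidiagonal_swap (f := f), Finset.mul_sum]
  refine Finset.sum_congr rfl fun p hp => ?_
  obtain ⟨j, k⟩ := p
  obtain rfl : j + k = n := by simpa using hp
  simp only [f, Prod.swap]
  rw [Nat.choose_symm_add.symm, Nat.cast_add_choose]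
  have h1 : (j.factorial : ℝ) ≠ 0 := by exact_mod_cast j.factorial_ne_zero
  have h2 : (k.factorial : ℝ) ≠ 0 := by exact_mod_cast k.factorial_ne_zero
  have h3 : ((j + k).factorial : ℝ) ≠ 0 := by exact_mod_cast (j + k).factorial_ne_zero
  field_simp
  ring

theorem hasSum_norm_sq_laguerre2D (t : ℝ) (α : ℂ) (n : ℕ) :
    HasSum (fun m : ℕ => t ^ m / m.factorial * ‖laguerre2D m n α (starRingEnd ℂ α)‖ ^ 2)
      (Real.exp (t * ‖α‖ ^ 2) * ∑ j ∈ Finset.range (n + 1),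
        (n.choose j : ℝ) * n.choose j * j.factorial * t ^ j *
          ((1 - t) ^ 2 * ‖α‖ ^ 2) ^ (n - j)) := by
  have h := hasSum_laguerre2D_mul_laguerre2D t α (starRingEnd ℂ α) (starRingEnd ℂ α) α n n
  refine Complex.hasSum_ofReal.1 ?_
  have hval : Complex.exp (t * α * starRingEnd ℂ α) *
      hermite2D t n n (starRingEnd ℂ α - t * starRingEnd ℂ α) (α - t * α) =
      ((Real.exp (t * ‖α‖ ^ 2) * ∑ j ∈ Finset.range (n + 1),
        (n.choose j : ℝ) * n.choose j * j.factorial * t ^ j *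
          ((1 - t) ^ 2 * ‖α‖ ^ 2) ^ (n - j) : ℝ) : ℂ) := by
    push_cast
    rw [← Complex.mul_conj' α, mul_assoc]
    congr 1
    unfold hermite2D
    rw [min_self]
    refine Finset.sum_congr rfl fun j _ => ?_
    rw [mul_assoc _ (_ ^ (n - j)), ← mul_pow]
    congr 2
    ring
  rw [← hval]
  refine h.congr_fun fun m => ?_
  push_cast
  rw [← Complex.mul_conj', conj_laguerre2D, Complex.conj_conj]

theorem norm_sq_dispElem (α : ℂ) (m n : ℕ) :
    ‖dispElem α m n‖ ^ 2 = Real.exp (-‖α‖ ^ 2) *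
      ‖laguerre2D m n α (starRingEnd ℂ α)‖ ^ 2 / (m.factorial * n.factorial) := by
  unfold dispElem
  rw [norm_div, norm_mul, norm_mul, norm_pow, norm_neg, norm_one, one_pow, one_mul,
    Complex.norm_of_nonneg (Real.exp_pos _).le, Complex.norm_of_nonneg (Real.sqrt_nonneg _),
    div_pow, mul_pow, Real.sq_sqrt (by positivity), ← Real.exp_nat_mul]
  congr 3
  push_cast
  ring_nf

/-- The trace of `u^N D(α)† t^N D(α)`, as a double series of matrix elements. -/
theorem hasSum_pow_mul_pow_mul_norm_sq_dispElem {t u : ℝ} (ht : 0 ≤ t) (hu : 0 ≤ u)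
    (htu : u * t < 1) (α : ℂ) :
    HasSum (fun p : ℕ × ℕ => u ^ p.1 * t ^ p.2 * ‖dispElem α p.2 p.1‖ ^ 2)
      (1 / (1 - u * t) * Real.exp (-((1 - t) * (1 - u) * ‖α‖ ^ 2 / (1 - u * t)))) := by
  have hne : 1 - u * t ≠ 0 := by linarith
  refine hasSum_prod_of_nonneg (fun p => by positivity) (fun n => ?_)
    (g := fun n => Real.exp (-‖α‖ ^ 2 + t * ‖α‖ ^ 2) *
      (u ^ n / n.factorial * ∑ j ∈ Finset.range (n + 1),
        (n.choose j : ℝ) * n.choose j * j.factorial * t ^ j *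
          ((1 - t) ^ 2 * ‖α‖ ^ 2) ^ (n - j))) ?_
  · have h := (hasSum_norm_sq_laguerre2D t α n).mul_left
      (Real.exp (-‖α‖ ^ 2) * (u ^ n / n.factorial))
    rw [mul_mul_mul_comm, ← Real.exp_add] at h
    refine h.congr_fun fun m => ?_
    dsimp only
    rw [norm_sq_dispElem]
    ring
  · have h := (hasSum_pow_div_factorial_mul_sum_choose ht hu
      (by positivity : 0 ≤ (1 - t) ^ 2 * ‖α‖ ^ 2) htu).mul_left
        (Real.exp (-‖α‖ ^ 2 + t * ‖α‖ ^ 2))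
    rwa [mul_left_comm, ← Real.exp_add,
      show -‖α‖ ^ 2 + t * ‖α‖ ^ 2 + u * ((1 - t) ^ 2 * ‖α‖ ^ 2) / (1 - u * t) =
        -((1 - t) * (1 - u) * ‖α‖ ^ 2 / (1 - u * t)) by
          rw [← neg_div, eq_div_iff hne, add_mul, div_mul_cancel₀ _ hne]
          ring] at h

/-- Weighted Cauchy-Schwarz bound for a series `∑ d n * ψ n`. -/
theorem summable_norm_mul_and_norm_sq_tsum_le {s : ℝ} (hs : 0 < s) {d ψ : ℕ → ℂ}
    (hd : Summable fun n => s⁻¹ ^ n * ‖d n‖ ^ 2) (hψ : Summable fun n => s ^ n * ‖ψ n‖ ^ 2) :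
    (Summable fun n => ‖d n * ψ n‖) ∧
      ‖∑' n, d n * ψ n‖ ^ 2 ≤ (∑' n, s⁻¹ ^ n * ‖d n‖ ^ 2) * ∑' n, s ^ n * ‖ψ n‖ ^ 2 := by
  have hf : ∀ n, (√(s⁻¹ ^ n) * ‖d n‖) ^ 2 = s⁻¹ ^ n * ‖d n‖ ^ 2 := fun n => by
    rw [mul_pow, Real.sq_sqrt (by positivity)]
  have hg : ∀ n, (√(s ^ n) * ‖ψ n‖) ^ 2 = s ^ n * ‖ψ n‖ ^ 2 := fun n => by
    rw [mul_pow, Real.sq_sqrt (by positivity)]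
  have hfg : ∀ n, √(s⁻¹ ^ n) * ‖d n‖ * (√(s ^ n) * ‖ψ n‖) = ‖d n * ψ n‖ := fun n => by
    rw [mul_mul_mul_comm, ← Real.sqrt_mul (by positivity), ← mul_pow, inv_mul_cancel₀ hs.ne',
      one_pow, Real.sqrt_one, one_mul, norm_mul]
  have h := summable_mul_and_sq_tsum_mul_le (f := fun n => √(s⁻¹ ^ n) * ‖d n‖)
    (g := fun n => √(s ^ n) * ‖ψ n‖) (fun n => by positivity) (fun n => by positivity)
    (by simpa only [hf] using hd) (by simpa only [hg] using hψ)
  simp only [hf, hg, hfg] at h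
  exact ⟨h.1, (pow_le_pow_left₀ (norm_nonneg _) (norm_tsum_le_tsum_norm h.1) 2).trans h.2⟩

theorem summable_inv_pow_mul_norm_sq_dispElem {s : ℝ} (hs : 1 < s) (α : ℂ) (m : ℕ) :
    Summable fun n : ℕ => s⁻¹ ^ n * ‖dispElem α m n‖ ^ 2 := by
  have h := (hasSum_pow_mul_pow_mul_norm_sq_dispElem zero_le_one
    (inv_nonneg.2 (zero_le_one.trans hs.le))
    (by rw [mul_one]; exact inv_lt_one_of_one_lt₀ hs) α).summable.prod_symm.prod_factor m
  simpa using h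

/-- **Energy bound under displacement.** If `Σ s^n |ψ_n|² < ∞` for some `s > 1`, then
for every `m` the series of the displaced amplitude `φ_m = Σ_n ⟨m|D̂(α)|n⟩ ψ_n` converges
absolutely, and for every `0 ≤ t < s`,
`Σ_m t^m |φ_m|² ≤ (s/(s-t)) exp(-(s-1)|α|²(1/s - t(s-1)/(s(s-t)))) Σ_n s^n |ψ_n|² < ∞`. -/
theorem energy_bound_displacement (s : ℝ) (hs : 1 < s) (α : ℂ) (ψ : ℕ → ℂ)
    (hE : Summable fun n : ℕ => s ^ n * ‖ψ n‖ ^ 2) :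
    (∀ m : ℕ, Summable fun n : ℕ => ‖dispElem α m n * ψ n‖) ∧
    (∀ t : ℝ, 0 ≤ t → t < s →
      (Summable fun m : ℕ => t ^ m * ‖dispAmplitude α ψ m‖ ^ 2) ∧
      ∑' m : ℕ, t ^ m * ‖dispAmplitude α ψ m‖ ^ 2 ≤
        (s / (s - t)) *
          Real.exp (-((s - 1) * ‖α‖ ^ 2 * (1 / s - t * (s - 1) / (s * (s - t))))) *
          ∑' n : ℕ, s ^ n * ‖ψ n‖ ^ 2) := by
  have hs0 : 0 < s := zero_lt_one.trans hs
  have hcs := fun m => summable_norm_mul_and_norm_sq_tsum_le hs0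
    (summable_inv_pow_mul_norm_sq_dispElem hs α m) hE
  refine ⟨fun m => (hcs m).1, fun t ht hts => ?_⟩
  have hst : s - t ≠ 0 := by linarith
  have htrace := hasSum_pow_mul_pow_mul_norm_sq_dispElem ht (inv_nonneg.2 hs0.le)
    (by rwa [inv_mul_lt_one₀ hs0]) α
  rw [show 1 / (1 - s⁻¹ * t) = s / (s - t) by field_simp,
    show (1 - t) * (1 - s⁻¹) * ‖α‖ ^ 2 / (1 - s⁻¹ * t) =
      (s - 1) * ‖α‖ ^ 2 * (1 / s - t * (s - 1) / (s * (s - t))) by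
        have : 1 - s⁻¹ * t = (s - t) / s := by field_simp
        rw [this]
        field_simp
        ring] at htrace
  have hrow : HasSum (fun m => t ^ m * ∑' n, s⁻¹ ^ n * ‖dispElem α m n‖ ^ 2) _ :=
    ((Equiv.prodComm ℕ ℕ).hasSum_iff.2 htrace).prod_fiberwise fun m =>
      ((summable_inv_pow_mul_norm_sq_dispElem hs α m).hasSum.mul_left (t ^ m)).congr_fun
        fun n => by simp only [Function.comp, Equiv.prodComm_apply, Prod.swap]; ring
  have hbound := hrow.mul_right (∑' n : ℕ, s ^ n * ‖ψ n‖ ^ 2)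
  have hle : ∀ m, t ^ m * ‖dispAmplitude α ψ m‖ ^ 2 ≤
      t ^ m * (∑' n, s⁻¹ ^ n * ‖dispElem α m n‖ ^ 2) * ∑' n : ℕ, s ^ n * ‖ψ n‖ ^ 2 := fun m => by
    rw [mul_assoc]
    exact mul_le_mul_of_nonneg_left (hcs m).2 (pow_nonneg ht m)
  have hsum : Summable fun m : ℕ => t ^ m * ‖dispAmplitude α ψ m‖ ^ 2 :=
    Summable.of_nonneg_of_le (fun m => by positivity) hle hbound.summable
  exact ⟨hsum, hbound.tsum_eq ▸ hsum.tsum_le_tsum hle hbound.summable⟩
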